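/- Let M_0 ∈ ℝ^{p×H} (p ≤ H) have rank m (hypothesis H_0), and assume n^{1/2} vec(M̂ − M_0) converges in distribution to N(0, Γ). Let λ̂_1 ≥ … ≥ λ̂_p be the singular values of M̂ and Λ̂_1 = n Σ_{k=m+1}^p λ̂_k². Let Q_1 and Q_2 be the orthogonal projectors onto the left and right singular subspaces of M_0 associated with its p − m smallest (i.e. zero) singular values. Then Λ̂_1 converges in distribution to Σ_k ν_k W_k², where the W_k's are i.i.d. standard Gaussian variables and the ν_k's are the eigenvalues of (Q_2 ⊗ Q_1) Γ (Q_2 ⊗ Q_1). -/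

import Mathlib

open MeasureTheory ProbabilityTheory Filter Matrix Polynomial Topology
open scoped Kronecker

noncomputable section

/-- Convergence in distribution (weak convergence of the laws) of a sequence of random
elements `X n` towards the limit law `L`. -/
def TendstoInDistribution {Ω E : Type*} [MeasurableSpace Ω] [MeasurableSpace E] [TopologicalSpace E]
    (μ : Measure Ω) (X : ℕ → Ω → E) (L : Measure E) : Prop :=
  ∀ f : BoundedContinuousFunction E ℝ,
    Tendsto (fun n => ∫ ω, f (X n ω) ∂μ) atTop (𝓝 (∫ x, f x ∂L))

/-- Convergence in probability of `X n` towards the constant `c`. -/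
def TendstoInProbability {Ω E : Type*} [MeasurableSpace Ω] [PseudoMetricSpace E]
    (μ : Measure Ω) (X : ℕ → Ω → E) (c : E) : Prop :=
  ∀ ε : ℝ, 0 < ε → Tendsto (fun n => μ {ω | ε ≤ dist (X n ω) c}) atTop (𝓝 0)

/-- The law of a vector of i.i.d. standard Gaussian random variables. -/
def stdGaussianPi (ι : Type*) [Fintype ι] : Measure (ι → ℝ) :=
  Measure.pi fun _ => gaussianReal 0 1

/-- Positive semidefinite square root (junk value `0` if the matrix is not psd). -/
def matSqrt {ι : Type*} [Fintype ι] [DecidableEq ι] (Γ : Matrix ι ι ℝ) : Matrix ι ι ℝ :=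
  by classical exact if h : Γ.PosSemidef then
    (h.1.eigenvectorUnitary : Matrix ι ι ℝ) * diagonal (Real.sqrt ∘ h.1.eigenvalues) *
      (star h.1.eigenvectorUnitary : Matrix ι ι ℝ) else 0

/-- The centered Gaussian distribution `N(0, Γ)` on `ι → ℝ`. -/
def gaussianPi {ι : Type*} [Fintype ι] [DecidableEq ι] (Γ : Matrix ι ι ℝ) :
    Measure (ι → ℝ) :=
  (stdGaussianPi ι).map (fun z => matSqrt Γ *ᵥ z)

/-- The chi-squared distribution with `k` degrees of freedom: the law of the squared
Euclidean norm of a standard Gaussian vector of `ℝ^k`. -/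
def chiSquared (k : ℕ) : Measure ℝ :=
  (stdGaussianPi (Fin k)).map (fun z => ∑ i, z i ^ 2)

/-- `vec` operator stacking the columns of a `p × H` matrix. -/
def vecM {p H : ℕ} (M : Matrix (Fin p) (Fin H) ℝ) : Fin H × Fin p → ℝ :=
  fun x => M x.2 x.1

/-- The `(1-α)`-quantile of the law of the real random variable `T` under `ν`:
`inf {x | F(x) ≥ 1 - α}`. -/
def lawQuantile {Ω' : Type*} [MeasurableSpace Ω'] (ν : Measure Ω') (T : Ω' → ℝ) (α : ℝ) : ℝ :=
  sInf {x : ℝ | 1 - α ≤ (ν {ω' | T ω' ≤ x}).toReal}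

/-- A point `θ` is `ℳ`-nonsingular if `θ ∈ ℳ` and, near `θ`, the set `ℳ` is the zero set of a
continuously differentiable function `g` with values in some `ℝ^q` whose Jacobian at `θ` has
full rank `q`. -/
def MNonsingular {p : ℕ} (M : Set (Fin p → ℝ)) (θ : Fin p → ℝ) : Prop :=
  θ ∈ M ∧ ∃ (q : ℕ) (V : Set (Fin p → ℝ)) (g : (Fin p → ℝ) → Fin q → ℝ),
    IsOpen V ∧ θ ∈ V ∧ ContDiffOn ℝ 1 g V ∧
    (LinearMap.toMatrix' ((fderiv ℝ g θ) : (Fin p → ℝ) →ₗ[ℝ] (Fin q → ℝ))).rank = q ∧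
    M ∩ V = {x | g x = 0} ∩ V

/-- Moore–Penrose pseudo-inverse relation for real square matrices. -/
def IsMoorePenroseInv {ι : Type*} [Fintype ι] (A X : Matrix ι ι ℝ) : Prop :=
  A * X * A = A ∧ X * A * X = X ∧ (A * X)ᵀ = A * X ∧ (X * A)ᵀ = X * A


section helpers
open scoped Matrix.Norms.Frobenius

lemma hp_norm_sq {ι κ : Type*} [Fintype ι] [Fintype κ] (A : Matrix ι κ ℝ) :
    ‖A‖ ^ 2 = ∑ i, ∑ j, A i j ^ 2 := by
  rw [Matrix.frobenius_norm_def, ← Real.sqrt_eq_rpow, Real.sq_sqrt (by positivity)]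
  simp

lemma hp_norm_sq_trace {ι κ : Type*} [Fintype ι] [Fintype κ] (A : Matrix ι κ ℝ) :
    ‖A‖ ^ 2 = (A * Aᵀ).trace := by
  rw [hp_norm_sq]
  simp [Matrix.trace, Matrix.mul_apply, sq]

/-- Diagonalization with a prescribed enumeration of the eigenvalues. -/
lemma hp_diag {ι : Type*} [Fintype ι] [DecidableEq ι] (A : Matrix ι ι ℝ) (hA : Aᵀ = A)
    (d : ι → ℝ) (hd : A.charpoly = ∏ k, (Polynomial.X - Polynomial.C (d k))) :
    ∃ V : Matrix ι ι ℝ, V * Vᵀ = 1 ∧ Vᵀ * V = 1 ∧ A = V * diagonal d * Vᵀ := by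
  have hH : A.IsHermitian := by
    rw [Matrix.IsHermitian, Matrix.conjTranspose_eq_transpose_of_trivial, hA]
  have h1 : Multiset.map hH.eigenvalues Finset.univ.val = Multiset.map d Finset.univ.val := by
    have := hH.roots_charpoly_eq_eigenvalues
    have h2 : (∏ k, (Polynomial.X - Polynomial.C (d k))).roots = Multiset.map d Finset.univ.val := by
      rw [← Polynomial.roots_multiset_prod_X_sub_C (Multiset.map d Finset.univ.val),
        Multiset.map_map]
      rfl
    rw [hd, h2] at this
    simpa using this.symm
  obtain ⟨e, he⟩ : ∃ e : ι ≃ ι, ∀ i, d (e i) = hH.eigenvalues i := by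
    have h3 : ∀ c, Nonempty ({a // hH.eigenvalues a = c} ≃ {b // d b = c}) := by
      intro c
      rw [← Fintype.card_eq, Fintype.card_subtype, Fintype.card_subtype]
      have := congrArg (Multiset.count c) h1
      rw [Multiset.count_map, Multiset.count_map] at this
      simpa only [Finset.card_def, Finset.filter_val, eq_comm] using this
    exact ⟨Equiv.ofFiberEquiv (fun c => (h3 c).some), fun i => Equiv.ofFiberEquiv_map _ i⟩
  set U : Matrix ι ι ℝ := (hH.eigenvectorUnitary : Matrix ι ι ℝ) with hU
  have hUU : U * Uᵀ = 1 := by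
    have := Matrix.mem_unitaryGroup_iff.1 hH.eigenvectorUnitary.2
    simpa [Matrix.star_eq_conjTranspose] using this
  have hUU' : Uᵀ * U = 1 := mul_eq_one_comm.1 hUU
  have hsp : A = U * diagonal hH.eigenvalues * Uᵀ := by
    have := hH.spectral_theorem
    rw [Unitary.conjStarAlgAut_apply] at this
    simpa [Matrix.star_eq_conjTranspose, Function.comp_def] using this
  refine ⟨U.submatrix id e.symm, ?_, ?_, ?_⟩
  · rw [Matrix.transpose_submatrix, Matrix.submatrix_mul_equiv, hUU]; simp
  · rw [Matrix.transpose_submatrix, ← Matrix.submatrix_mul _ _ _ _ _ Function.bijective_id, hUU']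
    simp
  · have : diagonal d = (diagonal hH.eigenvalues).submatrix e.symm e.symm := by
      ext i j
      by_cases h : i = j
      · subst h; simp [← he]
      · simp [h]
    rw [this, Matrix.transpose_submatrix, Matrix.submatrix_mul_equiv, Matrix.submatrix_mul_equiv,
      ← hsp]
    simp

/-- orthogonal projectors of trace `r`. -/
def hpK (p : ℕ) (r : ℝ) : Set (Matrix (Fin p) (Fin p) ℝ) :=
  {P | P * P = P ∧ Pᵀ = P ∧ P.trace = r}

lemma hpK_norm {p : ℕ} {r : ℝ} {P : Matrix (Fin p) (Fin p) ℝ} (hP : P ∈ hpK p r) :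
    ‖P‖ ^ 2 = r := by
  obtain ⟨h1, h2, h3⟩ := hP
  rw [hp_norm_sq_trace, h2, h1, h3]

lemma hpK_compact (p : ℕ) (r : ℝ) : IsCompact (hpK p r) := by
  refine Metric.isCompact_of_isClosed_isBounded ?_ ?_
  · refine IsClosed.inter ?_ (IsClosed.inter ?_ ?_)
    · exact isClosed_eq (by fun_prop) (by fun_prop)
    · exact isClosed_eq (by fun_prop) (by fun_prop)
    · exact isClosed_eq (by fun_prop) (by fun_prop)
  · refine (Metric.isBounded_closedBall (x := 0) (r := Real.sqrt r)).subset ?_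
    intro P hP
    rw [mem_closedBall_zero_iff]
    exact Real.le_sqrt_of_sq_le (hpK_norm hP).le

lemma hp_proj_mem {p : ℕ} {r : ℝ} (V : Matrix (Fin p) (Fin p) ℝ) (hV' : Vᵀ * V = 1)
    (s : Finset (Fin p)) (hs : (s.card : ℝ) = r) :
    V * diagonal (fun i => if i ∈ s then (1 : ℝ) else 0) * Vᵀ ∈ hpK p r := by
  refine ⟨?_, ?_, ?_⟩
  · calc _ = V * diagonal (fun i => if i ∈ s then (1 : ℝ) else 0) * (Vᵀ * V) *
          diagonal (fun i => if i ∈ s then (1 : ℝ) else 0) * Vᵀ := by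
          simp only [Matrix.mul_assoc]
      _ = _ := by
          rw [hV', Matrix.mul_one, Matrix.mul_assoc V, diagonal_mul_diagonal]
          congr 3
          ext i
          split_ifs <;> simp
  · simp [Matrix.transpose_mul, Matrix.mul_assoc]
  · rw [Matrix.trace_mul_cycle, hV', Matrix.one_mul, Matrix.trace_diagonal]
    simp [hs]

lemma hp_card {p m : ℕ} :
    (Finset.univ.filter (fun k : Fin p => m ≤ (k : ℕ))).card = p - m := by
  rw [← Fintype.card_subtype, ← Nat.card_Ico, ← Fintype.card_coe]
  refine Fintype.card_congr ⟨fun k => ⟨k.1, by simp [k.2]⟩, fun k =>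
    ⟨⟨k.1, (Finset.mem_Ico.1 k.2).2⟩, (Finset.mem_Ico.1 k.2).1⟩, ?_, ?_⟩
  · intro k; rfl
  · intro k; rfl

lemma hp_sum_ineq {p m : ℕ} (hmp : m ≤ p) (d w : Fin p → ℝ) (hd0 : ∀ i, 0 ≤ d i)
    (hd : ∀ i j : Fin p, i ≤ j → d j ≤ d i) (hw0 : ∀ i, 0 ≤ w i) (hw1 : ∀ i, w i ≤ 1)
    (hw : ∑ i, w i = (p - m : ℕ)) :
    ∑ k : Fin p, (if m ≤ (k : ℕ) then d k else 0) ≤ ∑ k, d k * w k := by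
  have hcard : ∑ k : Fin p, (if m ≤ (k : ℕ) then (1 : ℝ) else 0) = (p - m : ℕ) := by
    rw [← Finset.sum_filter, Finset.sum_const, nsmul_eq_mul, mul_one, hp_card]
  obtain ⟨c, hc1, hc2⟩ : ∃ c, (∀ k : Fin p, (k : ℕ) < m → c ≤ d k) ∧
      (∀ k : Fin p, m ≤ (k : ℕ) → d k ≤ c) := by
    by_cases h : m < p
    · exact ⟨d ⟨m, h⟩, fun k hk => hd _ _ (by rw [Fin.le_def]; exact hk.le),
        fun k hk => hd _ _ (by rw [Fin.le_def]; exact hk)⟩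
    · exact ⟨0, fun k _ => hd0 k, fun k hk => by have := k.2; omega⟩
  have key : 0 ≤ ∑ k : Fin p, (d k - c) * (w k - (if m ≤ (k : ℕ) then (1 : ℝ) else 0)) := by
    refine Finset.sum_nonneg fun k _ => ?_
    by_cases h : m ≤ (k : ℕ)
    · simp only [h, if_true]
      exact mul_nonneg_of_nonpos_of_nonpos (by linarith [hc2 k h]) (by linarith [hw1 k])
    · simp only [h, if_false]
      exact mul_nonneg (by linarith [hc1 k (by omega)]) (by linarith [hw0 k])
  have e : ∑ k : Fin p, (d k - c) * (w k - (if m ≤ (k : ℕ) then (1 : ℝ) else 0)) =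
      ∑ k, d k * w k - ∑ k : Fin p, (if m ≤ (k : ℕ) then d k else 0)
      - c * (∑ k, w k - ∑ k : Fin p, (if m ≤ (k : ℕ) then (1 : ℝ) else 0)) := by
    rw [← Finset.sum_sub_distrib, ← Finset.sum_sub_distrib, Finset.mul_sum,
      ← Finset.sum_sub_distrib]
    refine Finset.sum_congr rfl fun k _ => ?_
    split_ifs <;> ring
  rw [e, hw, hcard] at key
  linarith

lemma hp_norm_PM {p H : ℕ} {r : ℝ} {P : Matrix (Fin p) (Fin p) ℝ} (hP : P ∈ hpK p r)
    (M : Matrix (Fin p) (Fin H) ℝ) : ‖P * M‖ ^ 2 = (P * (M * Mᵀ)).trace := by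
  rw [hp_norm_sq_trace, Matrix.transpose_mul, hP.2.1]
  rw [show P * M * (Mᵀ * P) = P * (M * Mᵀ) * P by simp only [Matrix.mul_assoc],
    Matrix.trace_mul_comm, ← Matrix.mul_assoc, hP.1]

/-- Ky Fan. -/
lemma hp_kyfan {p H m : ℕ} (hmp : m ≤ p) (M : Matrix (Fin p) (Fin H) ℝ) (σ : Fin p → ℝ)
    (hσdesc : ∀ i j : Fin p, i ≤ j → σ j ≤ σ i) (hσ0 : ∀ i, 0 ≤ σ i)
    (hσ : (M * Mᵀ).charpoly = ∏ k : Fin p, (Polynomial.X - Polynomial.C (σ k ^ 2))) :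
    (∀ P ∈ hpK p (p - m : ℕ), ∑ k : Fin p, (if m ≤ (k : ℕ) then σ k ^ 2 else 0) ≤ ‖P * M‖ ^ 2) ∧
    ∃ P ∈ hpK p (p - m : ℕ), ‖P * M‖ ^ 2 = ∑ k : Fin p, (if m ≤ (k : ℕ) then σ k ^ 2 else 0) := by
  obtain ⟨V, hV, hV', hA⟩ := hp_diag (M * Mᵀ) (by simp) (fun k => σ k ^ 2) hσ
  constructor
  · intro P hP
    rw [hp_norm_PM hP, hA]
    set W := Vᵀ * P * V with hW
    have hWt : Wᵀ = W := by simp [hW, Matrix.mul_assoc, hP.2.1]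
    have hWW : W * W = W := by
      calc W * W = Vᵀ * P * (V * Vᵀ) * P * V := by simp only [hW, Matrix.mul_assoc]
        _ = Vᵀ * (P * P) * V := by rw [hV]; simp only [Matrix.mul_assoc, Matrix.one_mul]
        _ = W := by rw [hP.1]
    have hWtr : W.trace = (p - m : ℕ) := by
      rw [hW, Matrix.trace_mul_cycle, hV, Matrix.one_mul, hP.2.2]
    have htr : (P * (V * diagonal (fun k => σ k ^ 2) * Vᵀ)).trace = ∑ k, σ k ^ 2 * W k k := by
      rw [show P * (V * diagonal (fun k => σ k ^ 2) * Vᵀ) = (P * V) * diagonal (fun k => σ k ^ 2) * Vᵀ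
        by simp only [Matrix.mul_assoc], Matrix.trace_mul_cycle, ← Matrix.mul_assoc, ← hW]
      simp [Matrix.trace, mul_comm]
    have hdiag : ∀ k, W k k = ∑ j, W k j ^ 2 := by
      intro k
      conv_lhs => rw [← hWW, Matrix.mul_apply]
      refine Finset.sum_congr rfl fun j _ => ?_
      rw [sq]; congr 1
      conv_lhs => rw [← hWt]
      rfl
    have hsq : ∀ k, W k k ^ 2 ≤ W k k := fun k => by
      conv_rhs => rw [hdiag]
      exact Finset.single_le_sum (f := fun j => W k j ^ 2) (fun j _ => sq_nonneg _)
        (Finset.mem_univ k)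
    rw [htr]
    refine hp_sum_ineq hmp (fun k => σ k ^ 2) (fun k => W k k) (fun _ => sq_nonneg _) ?_ ?_ ?_ hWtr
    · intro i j hij
      exact pow_le_pow_left₀ (hσ0 j) (hσdesc i j hij) 2
    · intro k; exact (sq_nonneg _).trans (hsq k)
    · intro k; nlinarith [hsq k]
  · set s : Finset (Fin p) := Finset.univ.filter (fun k : Fin p => m ≤ (k : ℕ)) with hs
    have hcard : s.card = p - m := hp_card
    have hP := hp_proj_mem V hV' s (r := (p - m : ℕ)) (by rw [hcard])
    refine ⟨_, hP, ?_⟩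
    rw [hp_norm_PM hP, hA]
    rw [show V * diagonal (fun i => if i ∈ s then (1:ℝ) else 0) * Vᵀ *
        (V * diagonal (fun k => σ k ^ 2) * Vᵀ) = V * diagonal (fun i => if i ∈ s then (1:ℝ) else 0) *
        (Vᵀ * V) * diagonal (fun k => σ k ^ 2) * Vᵀ by simp only [Matrix.mul_assoc]]
    rw [hV', Matrix.mul_one, Matrix.mul_assoc V, diagonal_mul_diagonal, Matrix.trace_mul_cycle, hV',
      Matrix.one_mul, Matrix.trace_diagonal]
    refine Finset.sum_congr rfl fun k _ => ?_
    simp [hs]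

lemma hp_trace_of_rank {p : ℕ} (Q : Matrix (Fin p) (Fin p) ℝ) (hQ : Q * Q = Q) :
    Q.trace = (Q.rank : ℝ) := by
  have hid : IsIdempotentElem (Matrix.toLin' Q) := by
    rw [IsIdempotentElem, Module.End.mul_eq_comp, ← Matrix.toLin'_mul, hQ]
  have h := (LinearMap.IsIdempotentElem.isProj_range _ hid).trace
  rw [Matrix.trace_toLin'_eq] at h
  rw [h, Matrix.rank]
  rfl

lemma hp_rank_one_sub {p : ℕ} (Q : Matrix (Fin p) (Fin p) ℝ) (hQ : Q * Q = Q) :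
    (1 - Q).rank = p - Q.rank := by
  have h1 := hp_trace_of_rank Q hQ
  have h2 := hp_trace_of_rank (1 - Q) (by
    rw [Matrix.mul_sub, Matrix.sub_mul, Matrix.sub_mul, hQ]; simp)
  rw [Matrix.trace_sub, h1, Matrix.trace_one, Fintype.card_fin] at h2
  have h3 : p = (1 - Q).rank + Q.rank := by
    have : (p : ℝ) = (1 - Q).rank + Q.rank := by linarith
    exact_mod_cast this
  omega

lemma hp_factor {p H m : ℕ} (hmp : m ≤ p) (M0 : Matrix (Fin p) (Fin H) ℝ) (hM0 : M0.rank = m)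
    (Q1 : Matrix (Fin p) (Fin p) ℝ) (hQ : Q1 * Q1 = Q1) (hQM : Q1 * M0 = 0)
    (hr : Q1.rank = p - m) : ∃ B : Matrix (Fin H) (Fin p) ℝ, 1 - Q1 = M0 * B := by
  have hQM' : (1 - Q1) * M0 = M0 := by rw [Matrix.sub_mul, hQM]; simp
  have hle : LinearMap.range M0.mulVecLin ≤ LinearMap.range (1 - Q1).mulVecLin := by
    conv_lhs => rw [← hQM', Matrix.mulVecLin_mul]
    exact LinearMap.range_comp_le_range _ _
  have heq : LinearMap.range M0.mulVecLin = LinearMap.range (1 - Q1).mulVecLin := by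
    apply Submodule.eq_of_le_of_finrank_eq hle
    change M0.rank = (1 - Q1).rank
    rw [hp_rank_one_sub Q1 hQ, hr, hM0]
    omega
  have hex : ∀ j : Fin p, ∃ v : Fin H → ℝ, M0 *ᵥ v = fun i => (1 - Q1) i j := by
    intro j
    have : (fun i => (1 - Q1) i j) ∈ LinearMap.range M0.mulVecLin := by
      rw [heq]
      refine ⟨Pi.single j 1, ?_⟩
      simp only [Matrix.mulVecLin_apply, Matrix.mulVec_single_one]
      rfl
    obtain ⟨v, hv⟩ := this
    exact ⟨v, hv⟩
  choose v hv using hex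
  refine ⟨fun i j => v j i, ?_⟩
  ext i j
  rw [← congrFun (hv j) i]
  rfl

lemma hp_kill {p H m : ℕ} (N : Matrix (Fin p) (Fin H) ℝ) (hN : N.rank ≤ m) :
    ∃ P ∈ hpK p (p - m : ℕ), P * N = 0 := by
  have hH : (N * Nᵀ).IsHermitian := by
    rw [Matrix.IsHermitian, Matrix.conjTranspose_eq_transpose_of_trivial]; simp
  obtain ⟨V, hV, hV', hA⟩ := hp_diag (N * Nᵀ) (by simp) hH.eigenvalues
    (by simpa using hH.charpoly_eq)
  have hrk : (N * Nᵀ).rank = N.rank := Matrix.rank_self_mul_transpose N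
  rw [hH.rank_eq_card_non_zero_eigs, Fintype.card_subtype] at hrk
  have hcc := Finset.card_filter_add_card_filter_not (s := (Finset.univ : Finset (Fin p)))
        (fun k : Fin p => hH.eigenvalues k ≠ 0)
  rw [Finset.card_univ, Fintype.card_fin] at hcc
  obtain ⟨s, hs, hcard⟩ := Finset.exists_subset_card_eq (n := p - m)
    (s := Finset.univ.filter (fun k : Fin p => ¬ hH.eigenvalues k ≠ 0)) (by omega)
  have hP := hp_proj_mem V hV' s (r := (p - m : ℕ)) (by rw [hcard])
  refine ⟨_, hP, ?_⟩
  rw [← norm_eq_zero, ← sq_eq_zero_iff, hp_norm_PM hP, hA]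
  rw [show V * diagonal (fun i => if i ∈ s then (1:ℝ) else 0) * Vᵀ *
        (V * diagonal hH.eigenvalues * Vᵀ) = V * diagonal (fun i => if i ∈ s then (1:ℝ) else 0) *
        (Vᵀ * V) * diagonal hH.eigenvalues * Vᵀ by simp only [Matrix.mul_assoc]]
  rw [hV', Matrix.mul_one, Matrix.mul_assoc V, diagonal_mul_diagonal, Matrix.trace_mul_cycle, hV',
      Matrix.one_mul, Matrix.trace_diagonal]
  refine Finset.sum_eq_zero fun k _ => ?_
  split_ifs with h
  · have := hs h
    simp at this
    simp [this]
  · simp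

lemma hp_close {p H : ℕ} {r : ℝ} {P Q1 : Matrix (Fin p) (Fin p) ℝ} (hP : P ∈ hpK p r)
    (hQ : Q1 ∈ hpK p r) (M0 : Matrix (Fin p) (Fin H) ℝ) (B : Matrix (Fin H) (Fin p) ℝ)
    (hB : 1 - Q1 = M0 * B) : ‖P - Q1‖ ≤ 2 * ‖B‖ * ‖P * M0‖ := by
  have hi : (1 - Q1) * (1 - Q1)ᵀ = 1 - Q1 := by
    rw [Matrix.transpose_sub, hQ.2.1, Matrix.transpose_one, Matrix.mul_sub, Matrix.sub_mul,
      Matrix.sub_mul, hQ.1]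
    simp
  have h1 : ‖P * (1 - Q1)‖ ^ 2 = r - (P * Q1).trace := by
    rw [hp_norm_PM hP, hi, Matrix.mul_sub, Matrix.mul_one, Matrix.trace_sub, hP.2.2]
  have h2 : ‖P - Q1‖ ^ 2 = 2 * ‖P * (1 - Q1)‖ ^ 2 := by
    rw [h1, hp_norm_sq_trace, Matrix.transpose_sub, hP.2.1, hQ.2.1, Matrix.mul_sub, Matrix.sub_mul,
      Matrix.sub_mul, hP.1, hQ.1, Matrix.trace_sub, Matrix.trace_sub, Matrix.trace_sub, hP.2.2,
      hQ.2.2, Matrix.trace_mul_comm Q1 P]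
    ring
  have h3 : ‖P * (1 - Q1)‖ ≤ ‖P * M0‖ * ‖B‖ := by
    rw [hB, ← Matrix.mul_assoc]; exact Matrix.frobenius_norm_mul _ _
  have h4 : 0 ≤ ‖P * (1 - Q1)‖ := norm_nonneg _
  have h5 : ‖P - Q1‖ ≤ 2 * ‖P * (1 - Q1)‖ := by
    apply le_of_sq_le_sq _ (by positivity)
    rw [h2]; nlinarith [sq_nonneg ‖P * (1 - Q1)‖]
  linarith

lemma hp_contr {p H : ℕ} (X : Matrix (Fin p) (Fin H) ℝ) (Q : Matrix (Fin H) (Fin H) ℝ)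
    (hQ : Q * Q = Q) (hQt : Qᵀ = Q) : ‖X * Q‖ ≤ ‖X‖ := by
  have h : ‖X‖ ^ 2 = ‖X * Q‖ ^ 2 + ‖X * (1 - Q)‖ ^ 2 := by
    simp only [hp_norm_sq_trace, Matrix.transpose_mul, Matrix.transpose_sub, hQt,
      Matrix.transpose_one]
    rw [← Matrix.trace_add]
    congr 1
    rw [show X * Q * (Q * Xᵀ) = X * (Q * Q) * Xᵀ by simp only [Matrix.mul_assoc],
      show X * (1 - Q) * ((1 - Q) * Xᵀ) = X * ((1 - Q) * (1 - Q)) * Xᵀ by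
        simp only [Matrix.mul_assoc]]
    rw [Matrix.mul_sub (1 - Q), Matrix.sub_mul, Matrix.sub_mul, hQ, ← Matrix.add_mul,
      ← Matrix.mul_add]
    simp
  apply le_of_sq_le_sq _ (norm_nonneg _)
  nlinarith [sq_nonneg ‖X * (1 - Q)‖]

/-- distance-like functional: the square root of the sum of the `p - m` smallest squared
singular values. -/
def hpG (p H m : ℕ) (M : Matrix (Fin p) (Fin H) ℝ) : ℝ :=
  sInf ((fun P : Matrix (Fin p) (Fin p) ℝ => ‖P * M‖) '' hpK p (p - m : ℕ))

lemma hpG_continuous (p H m : ℕ) : Continuous (hpG p H m) := by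
  refine IsCompact.continuous_sInf (f := fun (M : Matrix (Fin p) (Fin H) ℝ)
    (P : Matrix (Fin p) (Fin p) ℝ) => ‖P * M‖) (hpK_compact p _) ?_
  have h : Continuous fun x : Matrix (Fin p) (Fin H) ℝ × Matrix (Fin p) (Fin p) ℝ => x.2 * x.1 :=
    Continuous.matrix_mul continuous_snd continuous_fst
  exact h.norm

lemma hpG_le {p H m : ℕ} (M : Matrix (Fin p) (Fin H) ℝ) {P} (hP : P ∈ hpK p (p - m : ℕ)) :
    hpG p H m M ≤ ‖P * M‖ :=
  csInf_le ⟨0, by rintro _ ⟨P, _, rfl⟩; exact norm_nonneg _⟩ ⟨P, hP, rfl⟩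

lemma hpK_nonempty (p m : ℕ) : (hpK p (p - m : ℕ)).Nonempty := by
  obtain ⟨P, hP, -⟩ := hp_kill (p := p) (H := 0) (m := m) 0 (by simp)
  exact ⟨P, hP⟩

lemma hpG_attained {p H m : ℕ} (M : Matrix (Fin p) (Fin H) ℝ) :
    ∃ P ∈ hpK p (p - m : ℕ), hpG p H m M = ‖P * M‖ := by
  obtain ⟨P, hP, h⟩ := (hpK_compact p (p - m : ℕ)).exists_sInf_image_eq (hpK_nonempty p m)
    (f := fun P => ‖P * M‖) (by fun_prop)
  exact ⟨P, hP, h⟩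

lemma hpG_sq {p H m : ℕ} (hmp : m ≤ p) (M : Matrix (Fin p) (Fin H) ℝ) (σ : Fin p → ℝ)
    (hσdesc : ∀ i j : Fin p, i ≤ j → σ j ≤ σ i) (hσ0 : ∀ i, 0 ≤ σ i)
    (hσ : (M * Mᵀ).charpoly = ∏ k : Fin p, (Polynomial.X - Polynomial.C (σ k ^ 2))) :
    hpG p H m M ^ 2 = ∑ k : Fin p, (if m ≤ (k : ℕ) then σ k ^ 2 else 0) := by
  obtain ⟨h1, P, hP, h2⟩ := hp_kyfan hmp M σ hσdesc hσ0 hσ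
  obtain ⟨P', hP', h3⟩ := hpG_attained (m := m) M
  apply le_antisymm
  · rw [← h2]
    exact pow_le_pow_left₀ (by rw [h3]; exact norm_nonneg _) (hpG_le M hP) 2
  · rw [h3]; exact h1 P' hP'

lemma hpG_smul {p H m : ℕ} (M : Matrix (Fin p) (Fin H) ℝ) {s : ℝ} (hs : 0 ≤ s) :
    hpG p H m (s • M) = s * hpG p H m M := by
  have hn : ∀ P : Matrix (Fin p) (Fin p) ℝ, ‖P * (s • M)‖ = s * ‖P * M‖ := by
    intro P
    rw [Matrix.mul_smul, norm_smul, Real.norm_of_nonneg hs]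
  obtain ⟨P, hP, h⟩ := hpG_attained (m := m) M
  obtain ⟨P', hP', h'⟩ := hpG_attained (m := m) (s • M)
  apply le_antisymm
  · rw [h, ← hn]; exact hpG_le _ hP
  · rw [h', hn]; exact mul_le_mul_of_nonneg_left (hpG_le _ hP') hs

lemma hp_determ {p H m : ℕ} (_hpH : p ≤ H) (hmp : m ≤ p)
    (M0 : Matrix (Fin p) (Fin H) ℝ) (hM0 : M0.rank = m)
    (Q1 : Matrix (Fin p) (Fin p) ℝ) (Q2 : Matrix (Fin H) (Fin H) ℝ)
    (hQ1proj : Q1 * Q1 = Q1) (hQ1symm : Q1ᵀ = Q1) (hQ1M0 : Q1 * M0 = 0)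
    (hQ1rank : Q1.rank = p - m)
    (hQ2proj : Q2 * Q2 = Q2) (hQ2symm : Q2ᵀ = Q2) (hQ2M0 : M0 * Q2 = 0)
    (hQ2rank : Q2.rank = H - m) :
    ∃ C : ℝ, ∀ R s : ℝ, 0 < s → ∀ Z : Matrix (Fin p) (Fin H) ℝ, ‖Z‖ ≤ R →
      |hpG p H m (s • M0 + Z) - ‖Q1 * Z * Q2‖| ≤ C * R ^ 2 / s := by
  obtain ⟨B, hB⟩ := hp_factor hmp M0 hM0 Q1 hQ1proj hQ1M0 hQ1rank
  have hQ1K : Q1 ∈ hpK p (p - m : ℕ) :=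
    ⟨hQ1proj, hQ1symm, by rw [hp_trace_of_rank Q1 hQ1proj, hQ1rank]⟩
  have hnorm : ∀ P ∈ hpK p (p - m : ℕ), ‖P‖ = ‖Q1‖ := by
    intro P hP
    have := (hpK_norm hP).trans (hpK_norm hQ1K).symm
    exact (sq_eq_sq₀ (norm_nonneg _) (norm_nonneg _)).1 this
  refine ⟨4 * ‖B‖ * ‖Q1‖ * ‖Q2‖, fun R s hs Z hZ => ?_⟩
  have hR : 0 ≤ R := (norm_nonneg _).trans hZ
  have hPZ : ∀ P ∈ hpK p (p - m : ℕ), ‖P * Z‖ ≤ ‖Q1‖ * R := by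
    intro P hP
    rw [← hnorm P hP]
    exact (Matrix.frobenius_norm_mul _ _).trans (by gcongr)
  -- main comparison
  have key : ∀ P ∈ hpK p (p - m : ℕ), s * ‖P * M0‖ ≤ 2 * ‖Q1‖ * R →
      ‖P * Z * Q2 - Q1 * Z * Q2‖ ≤ 4 * ‖B‖ * ‖Q1‖ * ‖Q2‖ * R ^ 2 / s := by
    intro P hP h
    have h1 := hp_close hP hQ1K M0 B hB
    have h2 : ‖P * M0‖ ≤ 2 * ‖Q1‖ * R / s := by rw [le_div_iff₀ hs]; linarith
    have h3 : ‖P - Q1‖ ≤ 2 * ‖B‖ * (2 * ‖Q1‖ * R / s) := h1.trans (by gcongr)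
    rw [← Matrix.sub_mul, ← Matrix.sub_mul]
    calc ‖(P - Q1) * Z * Q2‖ ≤ ‖(P - Q1) * Z‖ * ‖Q2‖ := Matrix.frobenius_norm_mul _ _
      _ ≤ ‖P - Q1‖ * ‖Z‖ * ‖Q2‖ := by gcongr; exact Matrix.frobenius_norm_mul _ _
      _ ≤ 2 * ‖B‖ * (2 * ‖Q1‖ * R / s) * R * ‖Q2‖ := by gcongr
      _ = _ := by ring
  have hMQ : ∀ P : Matrix (Fin p) (Fin p) ℝ, P * (s • M0 + Z) * Q2 = P * Z * Q2 := by
    intro P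
    rw [Matrix.mul_add, Matrix.add_mul, Matrix.mul_smul, Matrix.smul_mul, Matrix.mul_assoc P M0 Q2,
      hQ2M0]
    simp
  have hsPM : ∀ P : Matrix (Fin p) (Fin p) ℝ, s * ‖P * M0‖ = ‖P * (s • M0 + Z) - P * Z‖ := by
    intro P
    rw [Matrix.mul_add, add_sub_cancel_right, Matrix.mul_smul, norm_smul, Real.norm_of_nonneg hs.le]
  rw [abs_sub_le_iff]
  constructor
  · obtain ⟨P, hP, hPN⟩ := hp_kill (m := m) ((s • M0 + Z) * (1 - Q2)) (by
      refine (Matrix.rank_mul_le_right _ _).trans ?_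
      rw [hp_rank_one_sub Q2 hQ2proj, hQ2rank]; omega)
    have e1 : P * (s • M0 + Z) = P * Z * Q2 := by
      rw [← hMQ, ← sub_eq_zero, ← hPN, Matrix.mul_sub, Matrix.mul_sub, Matrix.mul_one,
        Matrix.mul_assoc]
    have h2 := key P hP (by
      rw [hsPM, e1]
      refine (norm_sub_le _ _).trans ?_
      have := hp_contr (P * Z) Q2 hQ2proj hQ2symm
      linarith [hPZ P hP])
    have h3 := hpG_le (s • M0 + Z) hP
    rw [e1] at h3
    have h4 := norm_sub_norm_le (P * Z * Q2) (Q1 * Z * Q2)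
    linarith
  · obtain ⟨P, hP, h⟩ := hpG_attained (m := m) (s • M0 + Z)
    have h1 : hpG p H m (s • M0 + Z) ≤ ‖Q1‖ * R := by
      refine (hpG_le _ hQ1K).trans ?_
      rw [Matrix.mul_add, Matrix.mul_smul, hQ1M0, smul_zero, zero_add]
      exact hPZ Q1 hQ1K
    have h2 := key P hP (by
      rw [hsPM]
      refine (norm_sub_le _ _).trans ?_
      rw [← h]
      linarith [hPZ P hP])
    have h3 := hp_contr (P * (s • M0 + Z)) Q2 hQ2proj hQ2symm
    rw [hMQ, ← h] at h3
    have h4 := norm_sub_norm_le (Q1 * Z * Q2) (P * Z * Q2)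
    rw [norm_sub_rev] at h4
    linarith

/-- the matrix whose `vec` is `z`. -/
def hpUnvec {p H : ℕ} (z : Fin H × Fin p → ℝ) : Matrix (Fin p) (Fin H) ℝ :=
  fun i h => z (h, i)

lemma hpUnvec_continuous {p H : ℕ} : Continuous (hpUnvec (p := p) (H := H)) :=
  continuous_pi fun i => continuous_pi fun h => continuous_apply (h, i)

lemma hp_norm_kron {p H : ℕ} (Q1 : Matrix (Fin p) (Fin p) ℝ) (Q2 : Matrix (Fin H) (Fin H) ℝ)
    (hQ2symm : Q2ᵀ = Q2) (z : Fin H × Fin p → ℝ) :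
    ‖Q1 * hpUnvec z * Q2‖ ^ 2 = ((Q2 ⊗ₖ Q1) *ᵥ z) ⬝ᵥ ((Q2 ⊗ₖ Q1) *ᵥ z) := by
  have h := Matrix.kronecker_mulVec_vec Q1 (hpUnvec z) Q2
  have h2 : Matrix.vec (hpUnvec z) = z := rfl
  rw [h2, hQ2symm] at h
  rw [h, hp_norm_sq]
  simp only [dotProduct, Matrix.vec, Fintype.sum_prod_type, sq]
  rw [Finset.sum_comm]

lemma hp_matSqrt {ι : Type*} [Fintype ι] [DecidableEq ι] (Γ : Matrix ι ι ℝ) (h : Γ.PosSemidef) :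
    (matSqrt Γ)ᵀ = matSqrt Γ ∧ matSqrt Γ * matSqrt Γ = Γ := by
  rw [matSqrt, dif_pos h]
  set U : Matrix ι ι ℝ := (h.1.eigenvectorUnitary : Matrix ι ι ℝ) with hU
  have hst : (star h.1.eigenvectorUnitary : Matrix ι ι ℝ) = Uᵀ := by
    simp [hU, Matrix.star_eq_conjTranspose]
  have hUU : U * Uᵀ = 1 := by
    have := Matrix.mem_unitaryGroup_iff.1 h.1.eigenvectorUnitary.2
    simpa [Matrix.star_eq_conjTranspose] using this
  have hUU' : Uᵀ * U = 1 := mul_eq_one_comm.1 hUU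
  have hsp : Γ = U * diagonal h.1.eigenvalues * Uᵀ := by
    have := h.1.spectral_theorem
    rw [Unitary.conjStarAlgAut_apply] at this
    simpa [Matrix.star_eq_conjTranspose, Function.comp_def] using this
  rw [hst]
  constructor
  · simp [Matrix.mul_assoc]
  · conv_rhs => rw [hsp]
    calc _ = U * diagonal (Real.sqrt ∘ h.1.eigenvalues) * (Uᵀ * U) *
            diagonal (Real.sqrt ∘ h.1.eigenvalues) * Uᵀ := by simp only [Matrix.mul_assoc]
      _ = _ := by
        rw [hUU', Matrix.mul_one, Matrix.mul_assoc U, diagonal_mul_diagonal]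
        congr 3
        ext i
        exact Real.mul_self_sqrt (h.eigenvalues_nonneg i)

instance hp_prob_std (ι : Type*) [Fintype ι] : IsProbabilityMeasure (stdGaussianPi ι) := by
  unfold stdGaussianPi; infer_instance

lemma hp_cont_mulVec {ι : Type*} [Fintype ι] (A : Matrix ι ι ℝ) :
    Continuous (fun z : ι → ℝ => A *ᵥ z) :=
  Continuous.matrix_mulVec continuous_const continuous_id

instance hp_prob_gauss {ι : Type*} [Fintype ι] [DecidableEq ι] (Γ : Matrix ι ι ℝ) :
    IsProbabilityMeasure (gaussianPi Γ) := by
  unfold gaussianPi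
  exact Measure.isProbabilityMeasure_map (hp_cont_mulVec _).measurable.aemeasurable

/-- rotation invariance -/
lemma hp_rotation {ι : Type*} [Fintype ι] [DecidableEq ι] (W : Matrix ι ι ℝ) (hW : W * Wᵀ = 1) :
    (stdGaussianPi ι).map (fun z => W *ᵥ z) = stdGaussianPi ι := by
  have hW' : Wᵀ * W = 1 := mul_eq_one_comm.1 hW
  let e : EuclideanSpace ℝ ι ≃ₗᵢ[ℝ] EuclideanSpace ℝ ι :=
    { toLinearEquiv := LinearEquiv.ofLinearMap (Matrix.toEuclideanLin W) (Matrix.toEuclideanLin Wᵀ)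
        (by ext x i; simp [Matrix.toEuclideanLin, Matrix.toLpLin_apply, hW])
        (by ext x i; simp [Matrix.toEuclideanLin, Matrix.toLpLin_apply, hW'])
      norm_map' := by
        intro x
        rw [← sq_eq_sq₀ (norm_nonneg _) (norm_nonneg _), EuclideanSpace.real_norm_sq_eq,
          EuclideanSpace.real_norm_sq_eq]
        have h1 : ∀ y : ι → ℝ, ∑ i, y i ^ 2 = y ⬝ᵥ y := fun y => by simp [dotProduct, sq]
        have h2 : (W *ᵥ x.ofLp) ⬝ᵥ (W *ᵥ x.ofLp) = x.ofLp ⬝ᵥ x.ofLp := by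
          rw [Matrix.dotProduct_mulVec, Matrix.vecMul_mulVec, hW', Matrix.vecMul_one]
        rw [h1 x.ofLp, ← h2, ← h1]
        rfl }
  have hmap : ((stdGaussianPi ι).map (WithLp.toLp 2)) = stdGaussian (EuclideanSpace ℝ ι) :=
    map_pi_eq_stdGaussian
  have h3 : stdGaussianPi ι = (stdGaussian (EuclideanSpace ℝ ι)).map WithLp.ofLp := by
    rw [← hmap, Measure.map_map (by fun_prop) (by fun_prop)]
    exact Measure.map_id.symm
  conv_rhs => rw [h3, ← stdGaussian_map e, ← hmap]
  rw [Measure.map_map (by fun_prop) (by fun_prop), Measure.map_map (by fun_prop) (by fun_prop)]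
  rfl

lemma hp_law {p H : ℕ} (Γ : Matrix (Fin H × Fin p) (Fin H × Fin p) ℝ) (hΓ : Γ.PosSemidef)
    (Q1 : Matrix (Fin p) (Fin p) ℝ) (Q2 : Matrix (Fin H) (Fin H) ℝ)
    (hQ1proj : Q1 * Q1 = Q1) (hQ1symm : Q1ᵀ = Q1)
    (hQ2proj : Q2 * Q2 = Q2) (hQ2symm : Q2ᵀ = Q2)
    (nu : Fin H × Fin p → ℝ)
    (hnu : ((Q2 ⊗ₖ Q1) * Γ * (Q2 ⊗ₖ Q1)).charpoly =
      ∏ k : Fin H × Fin p, (Polynomial.X - Polynomial.C (nu k)))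
    (f : ℝ → ℝ) (hf : Continuous f) :
    ∫ z, f (‖Q1 * hpUnvec z * Q2‖ ^ 2) ∂(gaussianPi Γ) =
      ∫ x, f x ∂((stdGaussianPi (Fin H × Fin p)).map (fun w => ∑ k, nu k * w k ^ 2)) := by
  obtain ⟨hSt, hSS⟩ := hp_matSqrt Γ hΓ
  set S := matSqrt Γ with hS
  set K := Q2 ⊗ₖ Q1 with hK
  have hKt : Kᵀ = K := by
    rw [hK, ← Matrix.kroneckerMap_transpose, hQ1symm, hQ2symm]
  have hKK : K * K = K := by
    rw [hK, ← Matrix.mul_kronecker_mul, hQ1proj, hQ2proj]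
  have hch : (S * K * S).charpoly = ∏ k : Fin H × Fin p, (Polynomial.X - Polynomial.C (nu k)) := by
    rw [← hnu, ← hSS]
    have e1 : S * K * S = (S * K) * (K * S) := by
      rw [Matrix.mul_assoc S K (K * S), ← Matrix.mul_assoc K K S, hKK, Matrix.mul_assoc]
    rw [e1, Matrix.charpoly_mul_comm]
    simp only [Matrix.mul_assoc]
  obtain ⟨V, hV, hV', hA⟩ := hp_diag (S * K * S)
    (by simp only [Matrix.transpose_mul, hSt, hKt, Matrix.mul_assoc]) nu hch
  have hq : ∀ z : Fin H × Fin p → ℝ, ‖Q1 * hpUnvec (S *ᵥ z) * Q2‖ ^ 2 =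
      ∑ k, nu k * (Vᵀ *ᵥ z) k ^ 2 := by
    intro z
    rw [hp_norm_kron Q1 Q2 hQ2symm, ← hK]
    have e1 : (K *ᵥ S *ᵥ z) ⬝ᵥ (K *ᵥ S *ᵥ z) = z ⬝ᵥ ((S * K * S) *ᵥ z) := by
      rw [Matrix.mulVec_mulVec, Matrix.dotProduct_mulVec, Matrix.vecMul_mulVec,
        ← Matrix.dotProduct_mulVec]
      congr 2
      rw [Matrix.transpose_mul, hSt, hKt, Matrix.mul_assoc S K (K * S), ← Matrix.mul_assoc K K S,
        hKK, Matrix.mul_assoc]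
    have e2 : z ⬝ᵥ ((V * diagonal nu * Vᵀ) *ᵥ z) = (Vᵀ *ᵥ z) ⬝ᵥ (diagonal nu *ᵥ (Vᵀ *ᵥ z)) := by
      rw [← Matrix.mulVec_mulVec, ← Matrix.mulVec_mulVec, Matrix.dotProduct_mulVec,
        Matrix.mulVec_transpose V z]
    rw [e1, hA, e2]
    simp only [dotProduct, Matrix.mulVec_diagonal]
    refine Finset.sum_congr rfl fun k _ => by ring
  have hc : Continuous fun z : Fin H × Fin p → ℝ => ‖Q1 * hpUnvec z * Q2‖ ^ 2 := by
    have : Continuous fun z : Fin H × Fin p → ℝ => Q1 * hpUnvec z * Q2 :=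
      (continuous_const.matrix_mul hpUnvec_continuous).matrix_mul continuous_const
    exact this.norm.pow 2
  have hc1 : Continuous fun z : Fin H × Fin p → ℝ => f (‖Q1 * hpUnvec z * Q2‖ ^ 2) := hf.comp hc
  have hc2 : Continuous fun w : Fin H × Fin p → ℝ => f (∑ k, nu k * w k ^ 2) :=
    hf.comp (by fun_prop)
  rw [gaussianPi, integral_map (hp_cont_mulVec _).measurable.aemeasurable
    hc1.aestronglyMeasurable]
  have hc3 : Continuous fun w : Fin H × Fin p → ℝ => ∑ k, nu k * w k ^ 2 := by fun_prop
  rw [integral_map hc3.measurable.aemeasurable hf.aestronglyMeasurable]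
  conv_rhs => rw [← hp_rotation Vᵀ (by simpa using hV')]
  rw [integral_map (hp_cont_mulVec _).measurable.aemeasurable
    hc2.aestronglyMeasurable]
  refine integral_congr_ae (Eventually.of_forall fun z => ?_)
  simp only [← hS, hq]

lemma hp_pack {p H m : ℕ} (hpH : p ≤ H) (hmp : m ≤ p)
    (M0 : Matrix (Fin p) (Fin H) ℝ) (hM0 : M0.rank = m)
    (Γ : Matrix (Fin H × Fin p) (Fin H × Fin p) ℝ) (hΓ : Γ.PosSemidef)
    (Q1 : Matrix (Fin p) (Fin p) ℝ) (Q2 : Matrix (Fin H) (Fin H) ℝ)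
    (hQ1proj : Q1 * Q1 = Q1) (hQ1symm : Q1ᵀ = Q1) (hQ1M0 : Q1 * M0 = 0)
    (hQ1rank : Q1.rank = p - m)
    (hQ2proj : Q2 * Q2 = Q2) (hQ2symm : Q2ᵀ = Q2) (hQ2M0 : M0 * Q2 = 0)
    (hQ2rank : Q2.rank = H - m)
    (nu : Fin H × Fin p → ℝ)
    (hnu : ((Q2 ⊗ₖ Q1) * Γ * (Q2 ⊗ₖ Q1)).charpoly =
      ∏ k : Fin H × Fin p, (Polynomial.X - Polynomial.C (nu k))) :
    ∃ g0 : (Fin H × Fin p → ℝ) → ℝ, Continuous g0 ∧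
      (∀ R ε : ℝ, 0 < ε → ∀ᶠ n : ℕ in atTop, ∀ z : Fin H × Fin p → ℝ, ‖z‖ ≤ R →
        |hpG p H m (Real.sqrt n • M0 + hpUnvec z) - g0 z| < ε) ∧
      ∀ f : ℝ → ℝ, Continuous f → ∫ z, f (g0 z ^ 2) ∂(gaussianPi Γ) =
        ∫ x, f x ∂((stdGaussianPi (Fin H × Fin p)).map (fun w => ∑ k, nu k * w k ^ 2)) := by
  refine ⟨fun z => ‖Q1 * hpUnvec z * Q2‖, ?_, ?_, fun f hf => hp_law Γ hΓ Q1 Q2 hQ1proj hQ1symm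
    hQ2proj hQ2symm nu hnu f hf⟩
  · have : Continuous fun z : Fin H × Fin p → ℝ => Q1 * hpUnvec z * Q2 :=
      (continuous_const.matrix_mul hpUnvec_continuous).matrix_mul continuous_const
    exact this.norm
  · intro R ε hε
    obtain ⟨C, hC⟩ := hp_determ hpH hmp M0 hM0 Q1 Q2 hQ1proj hQ1symm hQ1M0 hQ1rank hQ2proj
      hQ2symm hQ2M0 hQ2rank
    have hcu : Continuous fun z : Fin H × Fin p → ℝ => ‖hpUnvec z‖ := hpUnvec_continuous.norm
    obtain ⟨A, hA⟩ := ((isCompact_closedBall (0 : Fin H × Fin p → ℝ) R).image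
      hcu).isBounded.exists_norm_le
    have hlim : Tendsto (fun n : ℕ => C * A ^ 2 / Real.sqrt n) atTop (𝓝 0) :=
      Tendsto.const_div_atTop (Real.tendsto_sqrt_atTop.comp tendsto_natCast_atTop_atTop) _
    filter_upwards [hlim.eventually (gt_mem_nhds hε), eventually_gt_atTop 0] with n hn hn0 z hz
    refine (hC A (Real.sqrt n) (Real.sqrt_pos.2 (by exact_mod_cast hn0)) (hpUnvec z) ?_).trans_lt hn
    have := hA _ ⟨z, by simpa using hz, rfl⟩
    simpa using this

end helpers

lemma hp_aemeas {Ω ι : Type*} [Fintype ι] [MeasurableSpace Ω] (μ : Measure Ω)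
    [IsProbabilityMeasure μ] (X : ℕ → Ω → ι → ℝ) (L : Measure (ι → ℝ)) [IsProbabilityMeasure L]
    (hX : TendstoInDistribution μ X L) : ∀ᶠ n in atTop, AEMeasurable (X n) μ := by
  have h1 : ∀ i : ι, ∀ᶠ n in atTop, AEMeasurable (fun ω => X n ω i) μ := by
    intro i
    let f : BoundedContinuousFunction (ι → ℝ) ℝ :=
      BoundedContinuousFunction.ofNormedAddCommGroup (fun x => Real.arctan (x i))
        (Real.continuous_arctan.comp (continuous_apply i)) (Real.pi / 2) (fun x => by
          rw [Real.norm_eq_abs, abs_le]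
          exact ⟨(Real.neg_pi_div_two_lt_arctan _).le, (Real.arctan_lt_pi_div_two _).le⟩)
    have ht := (hX (f + BoundedContinuousFunction.const _ 1)).sub (hX f)
    have hval : (∫ x, (f + BoundedContinuousFunction.const (ι → ℝ) (1:ℝ)) x ∂L) - ∫ x, f x ∂L = 1 := by
      rw [← integral_sub (BoundedContinuousFunction.integrable L _)
        (BoundedContinuousFunction.integrable L f)]
      simp
    rw [hval] at ht
    filter_upwards [ht.eventually (lt_mem_nhds (show (0:ℝ) < 1 by norm_num))] with n hn
    have hint : Integrable (fun ω => f (X n ω)) μ := by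
      by_contra hno
      have hno2 : ¬ Integrable
          (fun ω => (f + BoundedContinuousFunction.const (ι → ℝ) (1:ℝ)) (X n ω)) μ := by
        intro h
        apply hno
        have := h.sub (integrable_const (1:ℝ))
        refine this.congr (Eventually.of_forall fun ω => ?_)
        simp
      rw [integral_undef hno, integral_undef hno2] at hn
      simp at hn
    have hm : AEMeasurable (fun ω => Real.arctan (X n ω i)) μ := hint.aemeasurable
    have htan : Measurable Real.tan := by
      have : Real.tan = fun x => Real.sin x / Real.cos x := by
        ext x; exact Real.tan_eq_sin_div_cos x
      rw [this]; fun_prop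
    have := htan.comp_aemeasurable hm
    simpa [Function.comp_def, Real.tan_arctan] using this
  filter_upwards [eventually_all.2 h1] with n hn
  exact aemeasurable_pi_lambda _ hn

lemma hp_slutsky {Ω ι : Type*} [Fintype ι] [MeasurableSpace Ω] (μ : Measure Ω)
    [IsProbabilityMeasure μ] (X : ℕ → Ω → ι → ℝ) (L : Measure (ι → ℝ)) [IsProbabilityMeasure L]
    (hX : TendstoInDistribution μ X L) (g : ℕ → (ι → ℝ) → ℝ) (g0 : (ι → ℝ) → ℝ)
    (hg : ∀ n, Continuous (g n)) (hg0 : Continuous g0)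
    (hu : ∀ R ε : ℝ, 0 < ε → ∀ᶠ n in atTop, ∀ z : ι → ℝ, ‖z‖ ≤ R → |g n z - g0 z| < ε)
    (f : BoundedContinuousFunction ℝ ℝ) :
    Tendsto (fun n => ∫ ω, f (g n (X n ω)) ∂μ) atTop (𝓝 (∫ z, f (g0 z) ∂L)) := by
  have h0 : Tendsto (fun n => ∫ ω, f (g0 (X n ω)) ∂μ) atTop (𝓝 (∫ z, f (g0 z) ∂L)) :=
    hX (f.compContinuous ⟨g0, hg0⟩)
  suffices hd : Tendsto (fun n => ∫ ω, f (g n (X n ω)) ∂μ - ∫ ω, f (g0 (X n ω)) ∂μ) atTop (𝓝 0) by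
    simpa using hd.add h0
  -- cut-off functions
  let ψ : ℕ → BoundedContinuousFunction (ι → ℝ) ℝ := fun k =>
    BoundedContinuousFunction.ofNormedAddCommGroup (fun z => min 1 (max 0 (‖z‖ - k)))
      (by fun_prop) 1 (fun z => by
        rw [Real.norm_eq_abs, abs_le]
        exact ⟨by linarith [le_min zero_le_one (le_max_left 0 (‖z‖ - k))], min_le_left _ _⟩)
  have hψ : ∀ k z, ψ k z = min 1 (max 0 (‖z‖ - k)) := fun _ _ => rfl
  have hψ0 : ∀ k z, 0 ≤ ψ k z := fun k z => le_min zero_le_one (le_max_left 0 (‖z‖ - k))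
  have hψlim : Tendsto (fun k => ∫ z, ψ k z ∂L) atTop (𝓝 0) := by
    have : Tendsto (fun k => ∫ z, ψ k z ∂L) atTop (𝓝 (∫ _, (0:ℝ) ∂L)) := by
      refine tendsto_integral_of_dominated_convergence (fun _ => (1:ℝ)) ?_ (integrable_const _) ?_ ?_
      · intro k; exact (ψ k).continuous.aestronglyMeasurable
      · intro k
        refine Eventually.of_forall fun z => ?_
        rw [Real.norm_of_nonneg (hψ0 k z)]
        exact min_le_left _ _
      · refine Eventually.of_forall fun z => ?_
        refine tendsto_const_nhds.congr' ?_
        filter_upwards [eventually_ge_atTop ⌈‖z‖⌉₊] with k hk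
        have : ‖z‖ ≤ k := Nat.ceil_le.1 hk
        rw [hψ, max_eq_left (by linarith)]
        simp
    simpa using this
  rw [Metric.tendsto_atTop']
  intro ε hε
  set c : ℝ := 2 * ‖f‖ + 2 with hc
  have hcpos : 0 < c := by positivity
  obtain ⟨k, hk⟩ := (hψlim.eventually (gt_mem_nhds (show 0 < ε / c by positivity))).exists
  have hev1 := (hX (ψ k)).eventually (gt_mem_nhds hk)
  -- uniform continuity
  have hcomp : IsCompact (g0 '' Metric.closedBall 0 (k + 1)) :=
    (isCompact_closedBall _ _).image hg0
  obtain ⟨A, hA⟩ := hcomp.isBounded.exists_norm_le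
  have hfu := (isCompact_Icc (a := -(A + 1)) (b := A + 1)).uniformContinuousOn_of_continuous
    f.continuous.continuousOn
  rw [Metric.uniformContinuousOn_iff] at hfu
  obtain ⟨δ, hδ, hfδ⟩ := hfu (ε / c) (by positivity)
  have hev2 := hu (k + 1) (min δ 1) (by positivity)
  have hev := (hev1.and hev2).and (hp_aemeas μ X L hX)
  obtain ⟨N, hN⟩ := eventually_atTop.1 hev
  refine ⟨N, fun n hn => ?_⟩
  obtain ⟨⟨hn1, hn2⟩, hn3⟩ := hN n hn.le
  have hb : ∀ z, |f (g n z) - f (g0 z)| ≤ ε / c + 2 * ‖f‖ * ψ k z := by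
    intro z
    by_cases hz : ‖z‖ ≤ k + 1
    · have h1 := hn2 z hz
      have h2 := hA (g0 z) ⟨z, by simpa using hz, rfl⟩
      rw [Real.norm_eq_abs, abs_le] at h2
      have h3 := abs_lt.1 (h1.trans_le (min_le_right _ _))
      have h4 := hfδ (g n z) ⟨by linarith, by linarith⟩ (g0 z) ⟨by linarith, by linarith⟩
        (h1.trans_le (min_le_left _ _))
      rw [Real.dist_eq] at h4
      have := mul_nonneg (mul_nonneg zero_le_two (norm_nonneg f)) (hψ0 k z)
      linarith
    · have : ψ k z = 1 := by
        rw [hψ, min_eq_left]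
        exact le_max_of_le_right (by linarith)
      rw [this]
      have h1 := f.norm_coe_le_norm (g n z)
      have h2 := f.norm_coe_le_norm (g0 z)
      have h3 := norm_sub_le (f (g n z)) (f (g0 z))
      rw [Real.norm_eq_abs (_ - _)] at h3
      have : 0 < ε / c := by positivity
      linarith
  have hint : ∀ h : BoundedContinuousFunction (ι → ℝ) ℝ, Integrable (fun ω => h (X n ω)) μ := by
    intro h
    refine Integrable.of_bound (C := ‖h‖) ?_ (Eventually.of_forall fun ω => h.norm_coe_le_norm _)
    exact (h.continuous.measurable.comp_aemeasurable hn3).aestronglyMeasurable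
  have i1 : Integrable (fun ω => f (g n (X n ω))) μ := hint (f.compContinuous ⟨g n, hg n⟩)
  have i2 : Integrable (fun ω => f (g0 (X n ω))) μ := hint (f.compContinuous ⟨g0, hg0⟩)
  have i3 := hint (ψ k)
  rw [dist_zero_right, ← integral_sub i1 i2]
  calc _ ≤ ∫ ω, (ε / c + 2 * ‖f‖ * ψ k (X n ω)) ∂μ := by
        refine norm_integral_le_of_norm_le ((integrable_const _).add (i3.const_mul _)) ?_
        exact Eventually.of_forall fun ω => hb (X n ω)
    _ = ε / c + 2 * ‖f‖ * ∫ ω, ψ k (X n ω) ∂μ := by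
        rw [integral_add (integrable_const _) (i3.const_mul _), integral_const_mul]
        simp
    _ ≤ ε / c + 2 * ‖f‖ * (ε / c) := by gcongr
    _ < (2 * ‖f‖ + 2) * (ε / c) := by
        have : 0 < ε / c := by positivity
        linarith
    _ = ε := by rw [← hc]; field_simp

/-- Proposition 5: under `H₀ : rank(M₀) = m` and
`n^{1/2} vec(M̂ − M₀) →ᵈ N(0, Γ)`, the statistic `Λ̂₁ = n Σ_{k=m+1}^p λ̂_k²` converges in
distribution to `Σ_k ν_k W_k²`, where the `ν_k` are the eigenvalues of
`(Q₂ ⊗ Q₁) Γ (Q₂ ⊗ Q₁)` and the `W_k` are i.i.d. standard Gaussians. Here `Q₁, Q₂` are the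
orthogonal projectors onto the left/right singular subspaces of `M₀` associated with its
`p − m` zero singular values, and the `λ̂_k` are the (descending) singular values of `M̂`. -/
theorem stmt_7 {p H m : ℕ} (hpH : p ≤ H) (hmp : m ≤ p)
    {Ω : Type*} [MeasurableSpace Ω] (μ : Measure Ω) [IsProbabilityMeasure μ]
    (M0 : Matrix (Fin p) (Fin H) ℝ) (hM0 : M0.rank = m)
    (Γ : Matrix (Fin H × Fin p) (Fin H × Fin p) ℝ) (hΓ : Γ.PosSemidef)
    (Mhat : ℕ → Ω → Matrix (Fin p) (Fin H) ℝ)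
    (hconv : TendstoInDistribution μ
      (fun n ω => Real.sqrt n • vecM (Mhat n ω - M0)) (gaussianPi Γ))
    (Q1 : Matrix (Fin p) (Fin p) ℝ) (Q2 : Matrix (Fin H) (Fin H) ℝ)
    (hQ1proj : Q1 * Q1 = Q1) (hQ1symm : Q1ᵀ = Q1) (hQ1M0 : Q1 * M0 = 0)
    (hQ1rank : Q1.rank = p - m)
    (hQ2proj : Q2 * Q2 = Q2) (hQ2symm : Q2ᵀ = Q2) (hQ2M0 : M0 * Q2 = 0)
    (hQ2rank : Q2.rank = H - m)
    (σhat : ℕ → Ω → Fin p → ℝ)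
    (hσdesc : ∀ n ω, ∀ i j : Fin p, i ≤ j → σhat n ω j ≤ σhat n ω i)
    (hσnonneg : ∀ n ω i, 0 ≤ σhat n ω i)
    (hσsv : ∀ n ω, (Mhat n ω * (Mhat n ω)ᵀ).charpoly =
      ∏ k : Fin p, (Polynomial.X - Polynomial.C (σhat n ω k ^ 2)))
    (nu : Fin H × Fin p → ℝ)
    (hnu : ((Q2 ⊗ₖ Q1) * Γ * (Q2 ⊗ₖ Q1)).charpoly =
      ∏ k : Fin H × Fin p, (Polynomial.X - Polynomial.C (nu k))) :
    TendstoInDistribution μ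
      (fun n ω => (n : ℝ) * ∑ k : Fin p, (if m ≤ (k : ℕ) then σhat n ω k ^ 2 else 0))
      ((stdGaussianPi (Fin H × Fin p)).map (fun w => ∑ k, nu k * w k ^ 2)) := by
  obtain ⟨g0, hg0, hu, hlaw⟩ := hp_pack hpH hmp M0 hM0 Γ hΓ Q1 Q2 hQ1proj hQ1symm hQ1M0 hQ1rank
    hQ2proj hQ2symm hQ2M0 hQ2rank nu hnu
  intro f
  let f2 : BoundedContinuousFunction ℝ ℝ := f.compContinuous ⟨fun x => x ^ 2, by fun_prop⟩
  have hg : ∀ n : ℕ, Continuous fun z : Fin H × Fin p → ℝ =>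
      hpG p H m (Real.sqrt n • M0 + hpUnvec z) := fun n =>
    (hpG_continuous p H m).comp (continuous_const.add hpUnvec_continuous)
  have h := hp_slutsky μ _ (gaussianPi Γ) hconv
    (fun n z => hpG p H m (Real.sqrt n • M0 + hpUnvec z)) g0 hg hg0 hu f2
  have hlim : ∫ z, f2 (g0 z) ∂(gaussianPi Γ) = ∫ x, f x
      ∂((stdGaussianPi (Fin H × Fin p)).map (fun w => ∑ k, nu k * w k ^ 2)) :=
    hlaw f f.continuous
  rw [hlim] at h
  refine h.congr fun n => ?_
  refine integral_congr_ae (Eventually.of_forall fun ω => ?_)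
  have e1 : Real.sqrt n • M0 + hpUnvec (Real.sqrt n • vecM (Mhat n ω - M0)) =
      Real.sqrt n • Mhat n ω := by
    ext i j
    simp [hpUnvec, vecM]
    ring
  change f (hpG p H m (Real.sqrt n • M0 + hpUnvec (Real.sqrt n • vecM (Mhat n ω - M0))) ^ 2) = _
  rw [e1, hpG_smul _ (Real.sqrt_nonneg _), mul_pow, Real.sq_sqrt (Nat.cast_nonneg n),
    hpG_sq hmp (Mhat n ω) (σhat n ω) (hσdesc n ω) (hσnonneg n ω) (hσsv n ω)]


end
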